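/- Let N ≥ 1, let R(x) = Σ_{k=0}^{d} R_k x^k and D(x) = Σ_{k=0}^{e} D_k x^k be complex polynomials with D monic and 1 ≤ deg R = d, e = deg D < d. Let U ⊆ ℝ be an open set on which D has no real zero, and let V : U → ℂ be differentiable with V'(x) = R(x)/D(x) for all x ∈ U. Then for every tuple μ = (μ_1,…,μ_n) of nonnegative integers, the following identity of ℂ-valued functions holds at every point x = (x_1,…,x_N) ∈ U^N: Σ_{i=1}^N ∂/∂x_i [ D(x_i) x_i^{μ_1} p_{μ_2}(x)⋯p_{μ_n}(x) Δ(x)² e^{−Σ_{a=1}^N V(x_a)} ] = − Q_μ(x) Δ(x)² e^{−Σ_{a=1}^N V(x_a)}. -/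

import Mathlib

/-!
Write `y_i` for the coordinates of `x` and `f = D · X^{μ₁}`. By the product rule, at a point where
`Δ ≠ 0` the `i`-th partial derivative is `Δ² e^{-∑ V}` times

  `f'(y_i) P + f(y_i) ∂_i P + f(y_i) P (2 ∑_{j ≠ i} 1 / (y_i - y_j) - V'(y_i))`,  `P = ∏ p_{μ_k}`.

Summed over `i`, the `V'` terms give `∑ R(y_i) y_i^{μ₁} P`, because `D V' = R`, and the terms in
`∂_i P` give the last sum in `Q_μ`. The remaining terms are handled one monomial `y^m` of `f` at a
time: after symmetrizing in `(i, j)`, the off-diagonal pairs contribute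
`(y_i^m - y_j^m) / (y_i - y_j) = ∑_a y_i^a y_j^{m-1-a}` and the derivative `m y_i^{m-1}` is exactly
the missing diagonal (`sum_pow_deriv_add_pole`).

At a point where `Δ = 0`, the factor `Δ²` vanishes to second order, so both sides are zero.
-/

open Finset Polynomial

/-- `p_k(x) = ∑ x_i^k`, as a complex number. -/
noncomputable def pkC (N : ℕ) (k : ℕ) (x : Fin N → ℝ) : ℂ := ∑ i, (x i : ℂ) ^ k

/-- `p_{μ₂} ⋯ p_{μ_n}(x)` for a list of indices. -/
noncomputable def pListC (N : ℕ) (μs : List ℕ) (x : Fin N → ℝ) : ℂ :=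
  (μs.map (fun m => pkC N m x)).prod

/-- The Vandermonde determinant `Δ(x) = ∏_{i<j} (x_i - x_j)`. -/
noncomputable def vdmC (N : ℕ) (x : Fin N → ℝ) : ℂ :=
  ∏ i : Fin N, ∏ j ∈ Finset.Ioi i, ((x i : ℂ) - (x j : ℂ))

/-- The weight `Δ(x)² e^{-∑_a V(x_a)}`. -/
noncomputable def wtC (N : ℕ) (V : ℝ → ℂ) (x : Fin N → ℝ) : ℂ :=
  vdmC N x ^ 2 * Complex.exp (- ∑ a : Fin N, V (x a))

/-- The rational loop-equation polynomial `Q_μ` evaluated at `x`, for `μ = μ₁ :: μs`. -/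
noncomputable def QratFn (N : ℕ) (R D : Polynomial ℂ) (μ₁ : ℕ) (μs : List ℕ)
    (x : Fin N → ℝ) : ℂ :=
  (∑ i : Fin N, R.eval (x i : ℂ) * (x i : ℂ) ^ μ₁) * pListC N μs x
  - (∑ k ∈ Finset.range (D.natDegree + 1), D.coeff k *
      ∑ j ∈ Finset.range (k + μ₁), pkC N j x * pkC N (k + μ₁ - 1 - j) x * pListC N μs x)
  - (∑ i : Fin μs.length, (μs.get i : ℂ) *
      (∑ a : Fin N, D.eval (x a : ℂ) * (x a : ℂ) ^ (μ₁ + μs.get i - 1))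
      * pListC N (μs.eraseIdx i) x)

/-- Product rule in logarithmic form: logarithmic derivatives add up. -/
lemma hasDerivAt_prod_log {ι : Type*} (s : Finset ι) (f : ι → ℝ → ℂ) (l : ι → ℂ) (t : ℝ)
    (h : ∀ i ∈ s, HasDerivAt (f i) (f i t * l i) t) :
    HasDerivAt (fun u => ∏ i ∈ s, f i u) ((∏ i ∈ s, f i t) * ∑ i ∈ s, l i) t := by
  classical
  induction s using Finset.induction_on with
  | empty => simpa using hasDerivAt_const t (1 : ℂ)
  | insert a s ha ih =>
    have h1 := (h a (Finset.mem_insert_self a s)).mul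
      (ih fun i hi => h i (Finset.mem_insert_of_mem hi))
    simp only [Finset.prod_insert ha, Finset.sum_insert ha]
    refine h1.congr_deriv ?_
    ring

lemma hasDerivAt_coord {N : ℕ} (x : Fin N → ℝ) (i a : Fin N) :
    HasDerivAt (fun s : ℝ => ((Function.update x i s a : ℝ) : ℂ))
      (if a = i then 1 else 0) (x i) := by
  by_cases h : a = i
  · subst h
    simpa using (hasDerivAt_id (x a)).ofReal_comp
  · simpa [h] using hasDerivAt_const (x i) ((x a : ℝ) : ℂ)

lemma hasDerivAt_pkC {N : ℕ} (m : ℕ) (x : Fin N → ℝ) (i : Fin N) :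
    HasDerivAt (fun s : ℝ => pkC N m (Function.update x i s))
      ((m : ℂ) * (x i : ℂ) ^ (m - 1)) (x i) := by
  have h := HasDerivAt.fun_sum (u := Finset.univ)
    (fun (a : Fin N) _ => (hasDerivAt_coord x i a).pow m)
  refine h.congr_deriv ?_
  simp

lemma hasDerivAt_pListC {N : ℕ} (μs : List ℕ) (x : Fin N → ℝ) (i : Fin N) :
    HasDerivAt (fun s : ℝ => pListC N μs (Function.update x i s))
      (∑ l : Fin μs.length, (μs.get l : ℂ) * (x i : ℂ) ^ (μs.get l - 1)
        * pListC N (μs.eraseIdx l) x) (x i) := by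
  induction μs with
  | nil => simpa [pListC] using hasDerivAt_const (x i) (1 : ℂ)
  | cons m t ih =>
    have hc : ∀ z : Fin N → ℝ, ∀ (m : ℕ) (t : List ℕ),
        pListC N (m :: t) z = pkC N m z * pListC N t z := by
      intro z m t; simp [pListC]
    have h := (hasDerivAt_pkC m x i).mul ih
    simp only [hc]
    refine h.congr_deriv ?_
    rw [Function.update_eq_self]
    have hs := Fin.sum_univ_succ (n := t.length) (fun l : Fin (t.length + 1) =>
      ((m :: t).get l : ℂ) * (x i : ℂ) ^ ((m :: t).get l - 1) * pListC N ((m :: t).eraseIdx l) x)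
    refine Eq.trans ?_ hs.symm
    simp only [List.get_cons_zero, List.get_cons_succ', Fin.val_zero, Fin.val_succ,
      List.eraseIdx_cons_zero, List.eraseIdx_cons_succ, hc, Finset.mul_sum]
    congr 1
    refine Finset.sum_congr rfl fun l _ => ?_
    ring

/-- The term `b = i` of the sum is `0⁻¹ = 0`, so the sum runs over `b ≠ i` in effect. -/
lemma hasDerivAt_vdmC {N : ℕ} (x : Fin N → ℝ) (hx : Function.Injective x) (i : Fin N) :
    HasDerivAt (fun s : ℝ => vdmC N (Function.update x i s))
      (vdmC N x * ∑ b : Fin N, ((x i : ℂ) - (x b : ℂ))⁻¹) (x i) := by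
  have h := hasDerivAt_prod_log Finset.univ
    (fun (a : Fin N) (s : ℝ) => ∏ b ∈ Finset.Ioi a,
      (((Function.update x i s a : ℝ) : ℂ) - ((Function.update x i s b : ℝ) : ℂ)))
    (fun a => ∑ b ∈ Finset.Ioi a, ((if a = i then 1 else 0) - (if b = i then 1 else 0))
      * ((x a : ℂ) - (x b : ℂ))⁻¹) (x i) (fun a _ => by
      refine hasDerivAt_prod_log _ _ _ _ fun b hb => ?_
      have hab : ((x a : ℂ) - (x b : ℂ)) ≠ 0 := by
        rw [sub_ne_zero]
        intro h
        exact (Finset.mem_Ioi.1 hb).ne (hx (Complex.ofReal_injective h))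
      refine ((hasDerivAt_coord x i a).sub (hasDerivAt_coord x i b)).congr_deriv ?_
      simp only [Function.update_eq_self]
      field_simp)
  simp only [Function.update_eq_self] at h
  refine h.congr_deriv ?_
  unfold vdmC
  congr 1
  have key : ∀ a b : Fin N, (if b ∈ Finset.Ioi a then
      (((if a = i then 1 else 0) - (if b = i then 1 else 0)) * ((x a : ℂ) - (x b : ℂ))⁻¹) else 0)
      = (if a = i then (if i < b then ((x i : ℂ) - (x b : ℂ))⁻¹ else 0) else 0)
        + (if b = i then (if a < i then ((x i : ℂ) - (x a : ℂ))⁻¹ else 0) else 0) := by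
    intro a b
    simp only [Finset.mem_Ioi]
    by_cases ha : a = i
    · subst ha
      by_cases hb : b = a
      · subst hb; simp
      · simp [hb]
    · by_cases hb : b = i
      · subst hb
        have : ((x a : ℂ) - (x b : ℂ))⁻¹ = -((x b : ℂ) - (x a : ℂ))⁻¹ := by
          rw [← inv_neg, neg_sub]
        simp [ha, this]
      · simp [ha, hb]
  have e : ∀ a : Fin N, (∑ b ∈ Finset.Ioi a, ((if a = i then 1 else 0) - (if b = i then 1 else 0))
      * ((x a : ℂ) - (x b : ℂ))⁻¹) = ∑ b : Fin N, (if b ∈ Finset.Ioi a then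
      (((if a = i then 1 else 0) - (if b = i then 1 else 0))
        * ((x a : ℂ) - (x b : ℂ))⁻¹) else 0) := by
    intro a
    rw [Finset.sum_ite_mem, Finset.univ_inter]
  simp only [e, key, Finset.sum_add_distrib]
  rw [Finset.sum_comm]
  simp only [Finset.sum_ite_eq', Finset.mem_univ, if_true]
  rw [← Finset.sum_add_distrib]
  refine Finset.sum_congr rfl fun b _ => ?_
  rcases lt_trichotomy b i with h | h | h
  · simp [h, h.not_gt]
  · subst h; simp
  · simp [h, h.not_gt]

lemma differentiableAt_vdmC {N : ℕ} (x : Fin N → ℝ) (i : Fin N) :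
    DifferentiableAt ℝ (fun s : ℝ => vdmC N (Function.update x i s)) (x i) := by
  unfold vdmC
  refine DifferentiableAt.fun_finsetProd fun a _ => DifferentiableAt.fun_finsetProd fun b _ => ?_
  exact (hasDerivAt_coord x i a).differentiableAt.sub (hasDerivAt_coord x i b).differentiableAt

lemma hasDerivAt_sum_V {N : ℕ} (V : ℝ → ℂ) (x : Fin N → ℝ) (i : Fin N) (v : ℂ)
    (hV : HasDerivAt V v (x i)) :
    HasDerivAt (fun s : ℝ => ∑ a : Fin N, V (Function.update x i s a)) v (x i) := by
  have h := HasDerivAt.fun_sum (u := Finset.univ)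
    (A := fun (a : Fin N) (s : ℝ) => V (Function.update x i s a))
    (A' := fun a => if a = i then v else 0) (x := x i) (fun a _ => by
      by_cases h : a = i
      · subst h
        simpa using hV
      · simpa [h] using hasDerivAt_const (x i) (V (x a)))
  simpa using h

/-- The loop equation for one monomial. In the double sum on the left the diagonal terms are
`0⁻¹ = 0`. -/
lemma sum_pow_deriv_add_pole {N : ℕ} (x : Fin N → ℝ) (hx : Function.Injective x) (m : ℕ) :
    (∑ i : Fin N, (m : ℂ) * (x i : ℂ) ^ (m - 1))
      + 2 * ∑ i : Fin N, (x i : ℂ) ^ m * ∑ b : Fin N, ((x i : ℂ) - (x b : ℂ))⁻¹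
    = ∑ j ∈ Finset.range m, pkC N j x * pkC N (m - 1 - j) x := by
  have key : ∀ i b : Fin N, (∑ j ∈ Finset.range m, (x i : ℂ) ^ j * (x b : ℂ) ^ (m - 1 - j))
      = (if i = b then (m : ℂ) * (x i : ℂ) ^ (m - 1) else 0)
        + ((x i : ℂ) ^ m * ((x i : ℂ) - (x b : ℂ))⁻¹
          + (x b : ℂ) ^ m * ((x b : ℂ) - (x i : ℂ))⁻¹) := by
    intro i b
    by_cases h : i = b
    · subst h
      simp only [if_true, sub_self, inv_zero, mul_zero, add_zero]
      rw [Finset.sum_congr rfl (g := fun _ => (x i : ℂ) ^ (m - 1)), Finset.sum_const,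
        Finset.card_range, nsmul_eq_mul]
      intro j hj
      rw [← pow_add]
      congr 1
      have := Finset.mem_range.1 hj
      omega
    · have hne : (x i : ℂ) - (x b : ℂ) ≠ 0 := by
        rw [sub_ne_zero]
        exact fun e => h (hx (Complex.ofReal_injective e))
      have hg := (Commute.all (x i : ℂ) (x b : ℂ)).geom_sum₂_mul m
      have e : ((x b : ℂ) - (x i : ℂ))⁻¹ = -((x i : ℂ) - (x b : ℂ))⁻¹ := by
        rw [← inv_neg, neg_sub]
      rw [if_neg h, e, zero_add, mul_neg, ← sub_eq_add_neg, ← sub_mul, ← hg,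
        mul_inv_cancel_right₀ hne]
  have hR : ∑ j ∈ Finset.range m, pkC N j x * pkC N (m - 1 - j) x
      = ∑ i : Fin N, ∑ b : Fin N,
        ∑ j ∈ Finset.range m, (x i : ℂ) ^ j * (x b : ℂ) ^ (m - 1 - j) := by
    simp only [pkC, Finset.sum_mul_sum]
    rw [Finset.sum_comm]
    refine Finset.sum_congr rfl fun i _ => ?_
    rw [Finset.sum_comm]
  rw [hR]
  simp only [key, Finset.sum_add_distrib, Finset.sum_ite_eq, Finset.mem_univ, if_true]
  congr 1
  rw [Finset.sum_comm (f := fun i b : Fin N => (x b : ℂ) ^ m * ((x b : ℂ) - (x i : ℂ))⁻¹)]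
  simp only [Finset.mul_sum]
  rw [← Finset.sum_add_distrib]
  refine Finset.sum_congr rfl fun i _ => ?_
  rw [← Finset.sum_add_distrib]
  exact Finset.sum_congr rfl fun b _ => by ring

/-- The loop equation for `f = D · X^{μ₁}`, obtained from the monomial case by linearity. -/
lemma sum_eval_deriv_add_pole {N : ℕ} (D : Polynomial ℂ) (μ₁ : ℕ) (x : Fin N → ℝ)
    (hx : Function.Injective x) :
    (∑ i : Fin N, (derivative (D * X ^ μ₁)).eval (x i : ℂ))
      + 2 * ∑ i : Fin N, (D * X ^ μ₁).eval (x i : ℂ) * ∑ b : Fin N, ((x i : ℂ) - (x b : ℂ))⁻¹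
    = ∑ k ∈ Finset.range (D.natDegree + 1), D.coeff k *
      ∑ j ∈ Finset.range (k + μ₁), pkC N j x * pkC N (k + μ₁ - 1 - j) x := by
  have hf : D * X ^ μ₁ = ∑ k ∈ Finset.range (D.natDegree + 1), C (D.coeff k) * X ^ (k + μ₁) := by
    conv_lhs => rw [D.as_sum_range_C_mul_X_pow]
    rw [Finset.sum_mul]
    exact Finset.sum_congr rfl fun k _ => by rw [pow_add, mul_assoc]
  simp only [hf, ← sum_pow_deriv_add_pole x hx, derivative_sum, eval_finsetSum,
    derivative_C_mul, derivative_X_pow, eval_mul, eval_C, eval_pow, eval_X, eval_natCast,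
    map_natCast, mul_add, Finset.sum_add_distrib, Finset.sum_mul]
  congr 1
  · rw [Finset.sum_comm]
    simp only [Finset.mul_sum]
  · rw [Finset.sum_comm, Finset.mul_sum]
    refine Finset.sum_congr rfl fun k _ => ?_
    simp only [Finset.mul_sum]
    refine Finset.sum_congr rfl fun i _ => Finset.sum_congr rfl fun b _ => ?_
    ring

/-- The `i`-th partial derivative, in terms of the derivative `v` of `Δ`; no assumption that
`Δ ≠ 0` is needed. -/
lemma hasDerivAt_integrand {N : ℕ} (R D : Polynomial ℂ) (V : ℝ → ℂ) (μ₁ : ℕ) (μs : List ℕ)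
    (x : Fin N → ℝ) (i : Fin N) (hD : D.eval (x i : ℂ) ≠ 0)
    (hV : HasDerivAt V (R.eval (x i : ℂ) / D.eval (x i : ℂ)) (x i)) (v : ℂ)
    (hv : HasDerivAt (fun s : ℝ => vdmC N (Function.update x i s)) v (x i)) :
    HasDerivAt (fun s : ℝ =>
        D.eval (s : ℂ) * (s : ℂ) ^ μ₁ * pListC N μs (Function.update x i s)
          * wtC N V (Function.update x i s))
      (vdmC N x * Complex.exp (- ∑ a : Fin N, V (x a)) *
        (((derivative (D * X ^ μ₁)).eval (x i : ℂ) * pListC N μs x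
          + (D * X ^ μ₁).eval (x i : ℂ) * (∑ l : Fin μs.length, (μs.get l : ℂ)
            * (x i : ℂ) ^ (μs.get l - 1) * pListC N (μs.eraseIdx l) x)
          - R.eval (x i : ℂ) * (x i : ℂ) ^ μ₁ * pListC N μs x) * vdmC N x
          + 2 * (D * X ^ μ₁).eval (x i : ℂ) * pListC N μs x * v)) (x i) := by
  have hf : HasDerivAt (fun s : ℝ => D.eval (s : ℂ) * (s : ℂ) ^ μ₁)
      ((derivative (D * X ^ μ₁)).eval (x i : ℂ)) (x i) := by
    have h := ((D * X ^ μ₁).hasDerivAt (x i : ℂ)).comp_ofReal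
    simpa only [eval_mul, eval_pow, eval_X] using h
  have h := (hf.mul (hasDerivAt_pListC μs x i)).mul
    ((hv.pow 2).mul (hasDerivAt_sum_V V x i _ hV).neg.cexp)
  refine h.congr_deriv ?_
  simp only [Pi.mul_apply, Pi.pow_apply, Pi.neg_apply, Function.update_eq_self,
    eval_mul, eval_pow, eval_X]
  field_simp
  ring

theorem stmt14 (N : ℕ) (hN : 1 ≤ N) (R D : Polynomial ℂ)
    (hD : D.Monic) (hR : 1 ≤ R.natDegree) (hdeg : D.natDegree < R.natDegree)
    (U : Set ℝ) (hU : IsOpen U) (hDne : ∀ u ∈ U, D.eval (u : ℂ) ≠ 0)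
    (V : ℝ → ℂ) (hV : ∀ u ∈ U, HasDerivAt V (R.eval (u : ℂ) / D.eval (u : ℂ)) u)
    (μ₁ : ℕ) (μs : List ℕ) (x : Fin N → ℝ) (hx : ∀ i, x i ∈ U) :
    (∑ i : Fin N, deriv (fun s : ℝ =>
        D.eval (s : ℂ) * (s : ℂ) ^ μ₁ * pListC N μs (Function.update x i s)
          * wtC N V (Function.update x i s)) (x i))
    = - QratFn N R D μ₁ μs x * wtC N V x := by
  by_cases hinj : Function.Injective x
  · have hd := fun i => (hasDerivAt_integrand R D V μ₁ μs x i (hDne _ (hx i)) (hV _ (hx i)) _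
      (hasDerivAt_vdmC x hinj i)).deriv
    simp only [hd]
    have hloop := sum_eval_deriv_add_pole D μ₁ x hinj
    have hQ2 : (∑ k ∈ Finset.range (D.natDegree + 1), D.coeff k *
        ∑ j ∈ Finset.range (k + μ₁), pkC N j x * pkC N (k + μ₁ - 1 - j) x * pListC N μs x)
        = ((∑ i : Fin N, (derivative (D * X ^ μ₁)).eval (x i : ℂ))
          + 2 * ∑ i : Fin N, (D * X ^ μ₁).eval (x i : ℂ)
            * ∑ b : Fin N, ((x i : ℂ) - (x b : ℂ))⁻¹) * pListC N μs x := by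
      rw [hloop, Finset.sum_mul]
      refine Finset.sum_congr rfl fun k _ => ?_
      rw [← Finset.sum_mul, mul_assoc]
    have hQ3 : (∑ l : Fin μs.length, (μs.get l : ℂ) *
        (∑ a : Fin N, D.eval (x a : ℂ) * (x a : ℂ) ^ (μ₁ + μs.get l - 1))
          * pListC N (μs.eraseIdx l) x)
        = ∑ i : Fin N, (D * X ^ μ₁).eval (x i : ℂ) * (∑ l : Fin μs.length, (μs.get l : ℂ)
            * (x i : ℂ) ^ (μs.get l - 1) * pListC N (μs.eraseIdx l) x) := by
      simp only [Finset.mul_sum, Finset.sum_mul]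
      rw [Finset.sum_comm]
      refine Finset.sum_congr rfl fun i _ => Finset.sum_congr rfl fun l _ => ?_
      -- For a zero index the truncated exponents differ, but the prefactor vanishes.
      rcases Nat.eq_zero_or_pos (μs.get l) with h0 | h0
      · simp only [h0, Nat.cast_zero, zero_mul, mul_zero]
      · rw [Nat.add_sub_assoc h0, pow_add, eval_mul, eval_pow, eval_X]
        ring
    rw [QratFn, hQ2, hQ3, wtC]
    simp only [Finset.sum_mul, Finset.mul_sum, add_mul, ← Finset.sum_add_distrib,
      ← Finset.sum_sub_distrib, ← Finset.sum_neg_distrib]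
    refine Finset.sum_congr rfl fun i _ => ?_
    simp only [← Finset.mul_sum, ← Finset.sum_mul]
    ring
  · have h0 : vdmC N x = 0 := by
      rw [Function.Injective] at hinj
      push Not at hinj
      obtain ⟨a, b, hab, hne⟩ := hinj
      unfold vdmC
      rcases lt_or_gt_of_ne hne with h | h
      · exact Finset.prod_eq_zero (Finset.mem_univ a)
          (Finset.prod_eq_zero (Finset.mem_Ioi.2 h) (by simp [hab]))
      · exact Finset.prod_eq_zero (Finset.mem_univ b)
          (Finset.prod_eq_zero (Finset.mem_Ioi.2 h) (by simp [hab]))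
    have hd := fun i => (hasDerivAt_integrand R D V μ₁ μs x i (hDne _ (hx i)) (hV _ (hx i)) _
      (differentiableAt_vdmC x i).hasDerivAt).deriv
    simp only [hd, h0]
    simp [wtC, h0]
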